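/- (Lemma "maintaingraphlem", graphical case: a graph with gradient bound L₁ on a past time interval keeps gradient bound 4L₁ and controlled height for a short later time.) Let n ≥ 1. For every L₁ ≥ 1 there exists λ₁ ∈ (0,1) such that the following holds. Let ρ₁, R₁, Γ₁ > 0, s₀ ∈ ℝ, and let u : (s₀−R₁², s₀+λ₁²R₁²) × Bⁿ(0, ρ₁+R₁) → ℝ be a graphical mean curvature flow with |u(t,x)| < Γ₁ + R₁ for all (t,x). Suppose that for all t ∈ (s₀−R₁², s₀): sup_{Bⁿ(0,ρ₁+R₁)} |u(t,·)| < Γ₁ − R₁ and sup_{Bⁿ(0,ρ₁+R₁)} |Du(t,·)| ≤ L₁. Then for all t ∈ (s₀, s₀+λ₁²R₁²) and all x ∈ Bⁿ(0,ρ₁): |u(t,x)| ≤ sup_{(s₀−R₁²,s₀) × Bⁿ(0,ρ₁+R₁)} |u| + R₁ and |Du(t,x)| ≤ 4L₁. -/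

import Mathlib

open Metric Set MeasureTheory

/-- Partial derivative `∂ᵢ g (x)`. -/
noncomputable def pd {n : ℕ} (g : EuclideanSpace ℝ (Fin n) → ℝ) (x : EuclideanSpace ℝ (Fin n))
    (i : Fin n) : ℝ :=
  fderiv ℝ g x (EuclideanSpace.single i 1)

/-- Second partial derivative `∂ᵢ∂ⱼ g (x)`. -/
noncomputable def pd2 {n : ℕ} (g : EuclideanSpace ℝ (Fin n) → ℝ) (x : EuclideanSpace ℝ (Fin n))
    (i j : Fin n) : ℝ :=
  fderiv ℝ (fun y => pd g y j) x (EuclideanSpace.single i 1)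

/-- Squared Euclidean norm `|Dg(x)|²` of the spatial gradient. -/
noncomputable def gradNormSq {n : ℕ} (g : EuclideanSpace ℝ (Fin n) → ℝ)
    (x : EuclideanSpace ℝ (Fin n)) : ℝ :=
  ∑ i, (pd g x i) ^ 2

/-- Euclidean norm `|Dg(x)|` of the spatial gradient. -/
noncomputable def gradNorm {n : ℕ} (g : EuclideanSpace ℝ (Fin n) → ℝ)
    (x : EuclideanSpace ℝ (Fin n)) : ℝ :=
  Real.sqrt (gradNormSq g x)

/-- Frobenius norm `|D²g(x)|` of the spatial Hessian. -/
noncomputable def hessNorm {n : ℕ} (g : EuclideanSpace ℝ (Fin n) → ℝ)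
    (x : EuclideanSpace ℝ (Fin n)) : ℝ :=
  Real.sqrt (∑ i, ∑ j, (pd2 g x i j) ^ 2)

/-- Right-hand side of the graphical mean curvature flow equation:
`∑ᵢⱼ (δᵢⱼ − ∂ᵢg ∂ⱼg / (1+|Dg|²)) ∂ᵢ∂ⱼ g`. -/
noncomputable def mcfRHS {n : ℕ} (g : EuclideanSpace ℝ (Fin n) → ℝ)
    (x : EuclideanSpace ℝ (Fin n)) : ℝ :=
  ∑ i, ∑ j,
    ((if i = j then (1 : ℝ) else 0) - pd g x i * pd g x j / (1 + gradNormSq g x)) * pd2 g x i j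

/-- `f` is a (smooth) graphical mean curvature flow on `I × U`. -/
def IsGMCF {n : ℕ} (I : Set ℝ) (U : Set (EuclideanSpace ℝ (Fin n)))
    (f : ℝ → EuclideanSpace ℝ (Fin n) → ℝ) : Prop :=
  ContDiffOn ℝ (⊤ : ℕ∞) (fun p : ℝ × EuclideanSpace ℝ (Fin n) => f p.1 p.2) (I ×ˢ U) ∧
  ∀ t ∈ I, ∀ x ∈ U, deriv (fun s => f s x) t = mcfRHS (f t) x

/-- Squared norm `|A|²(g,x)` of the second fundamental form of the graph of `g`
at `(x, g(x))`. -/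
noncomputable def secondFF2 {n : ℕ} (g : EuclideanSpace ℝ (Fin n) → ℝ)
    (x : EuclideanSpace ℝ (Fin n)) : ℝ :=
  ∑ i, ∑ j, ∑ k, ∑ l,
    ((if i = k then (1 : ℝ) else 0) - pd g x i * pd g x k / (1 + gradNormSq g x)) *
      ((if j = l then (1 : ℝ) else 0) - pd g x j * pd g x l / (1 + gradNormSq g x)) *
      (pd2 g x i j / Real.sqrt (1 + gradNormSq g x)) *
      (pd2 g x k l / Real.sqrt (1 + gradNormSq g x))

/-!
Write `tr_p` for the trace with respect to the metric of a graph of slope `p`, so that the flow is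
`∂ₜu = tr_{Du} D²u`. Everything follows from a weak maximum principle: a function which, wherever
it exceeds a bound, is touched from below by some `G` with `∂ₜG ≤ tr_p D²G` at critical points of
`G`, keeps that bound on a compact set if it satisfies it initially and laterally.

Since `tr_p` of the inner product is `n - |p|² / (1 + |p|²)`, the cutoff
`φ = R² - 2n(t - t₀) - |x - x₀|²` satisfies `∂ₜφ ≤ tr_p D²φ`, and `φ - (u - c)²` is a solution:
a sphere centred at height `c` and initially disjoint from the graph shrinks without touching it.
Hence `|u|` grows by at most `R` during the life of a sphere of radius `R`.

For the slope, `(1 + |Du|²) φ²` is touched from below by `(1 + (D_e u)²) φ²` with `e` the fixed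
unit direction of `Du` at the given point. At critical points the quadratic terms which
differentiating the flow in the direction `e` produces have a sign, so this is a barrier for the
maximum principle. Where and while `φ ≥ 3R²/4`, the quantity `1 + |Du|²` therefore grows at most
by the factor `16/9`.
-/

open Filter Topology InnerProductSpace
open scoped Gradient

theorem deriv_deriv_nonpos_of_isLocalMax {f : ℝ → ℝ} {a : ℝ} (hmax : IsLocalMax f a)
    (hf : ContinuousAt f a) : deriv (deriv f) a ≤ 0 := by
  by_contra! hpos
  have hmin : IsLocalMin f a := isLocalMin_of_deriv_deriv_pos hpos hmax.deriv_eq_zero hf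
  have hconst : f =ᶠ[𝓝 a] fun _ => f a := by
    filter_upwards [hmax, hmin] with s hle hge using le_antisymm hle hge
  have hderiv : deriv f =ᶠ[𝓝 a] fun _ => 0 := by simpa using hconst.deriv
  simp [hderiv.deriv_eq] at hpos

theorem nonneg_of_isLocalMaxOn_Iic_of_hasDerivAt {f : ℝ → ℝ} {f' a : ℝ}
    (hmax : IsLocalMaxOn f (Iic a) a) (hf : HasDerivAt f f' a) : 0 ≤ f' := by
  have hdir : (-1 : ℝ) ∈ posTangentConeAt (Iic a) a := by
    refine mem_posTangentConeAt_of_segment_subset ?_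
    rw [segment_symm, segment_eq_Icc (by linarith)]
    exact Icc_subset_Iic_self
  simpa using hmax.hasFDerivWithinAt_nonpos hf.hasFDerivAt.hasFDerivWithinAt hdir

section Trace

variable {ι E : Type*} [Fintype ι] [NormedAddCommGroup E] [InnerProductSpace ℝ E]

/-- The trace of a bilinear form with respect to the metric induced on a graph of slope `p`, whose
inverse is `1 - p ⊗ p / (1 + ‖p‖²)`. Graphical mean curvature flow reads
`∂ₜu = graphTrace b (∇u) (D²u)`. -/
noncomputable def graphTrace (b : OrthonormalBasis ι ℝ E) (p : E) :
    (E →L[ℝ] E →L[ℝ] ℝ) →ₗ[ℝ] ℝ where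
  toFun B := ∑ i, B (b i) (b i) - B p p / (1 + ‖p‖ ^ 2)
  map_add' B C := by
    simp only [_root_.add_apply, Finset.sum_add_distrib]
    ring
  map_smul' c B := by
    simp only [_root_.smul_apply, smul_eq_mul, RingHom.id_apply, ← Finset.mul_sum]
    ring

variable (b : OrthonormalBasis ι ℝ E) (p : E)

theorem graphTrace_apply (B : E →L[ℝ] E →L[ℝ] ℝ) :
    graphTrace b p B = ∑ i, B (b i) (b i) - B p p / (1 + ‖p‖ ^ 2) := rfl

theorem graphTrace_sub (B C : E →L[ℝ] E →L[ℝ] ℝ) :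
    graphTrace b p (B - C) = graphTrace b p B - graphTrace b p C := by
  simp only [graphTrace_apply, _root_.sub_apply, Finset.sum_sub_distrib]
  ring

theorem sum_sum_inner_mul_inner_mul_apply (B : E →L[ℝ] E →L[ℝ] ℝ) (v w : E) :
    ∑ i, ∑ j, ⟪b i, v⟫_ℝ * ⟪b j, w⟫_ℝ * B (b i) (b j) = B v w := by
  conv_rhs => rw [← b.sum_repr' v, ← b.sum_repr' w]
  simp only [map_sum, map_smul, _root_.sum_apply, _root_.smul_apply, smul_eq_mul, Finset.mul_sum,
    mul_assoc]
  rw [Finset.sum_comm]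
  exact Finset.sum_congr rfl fun i _ => Finset.sum_congr rfl fun j _ => mul_left_comm ..

theorem sum_sum_apply_wedge (B : E →L[ℝ] E →L[ℝ] ℝ) :
    ∑ i, ∑ j, B (⟪b i, p⟫_ℝ • b j - ⟪b j, p⟫_ℝ • b i) (⟪b i, p⟫_ℝ • b j - ⟪b j, p⟫_ℝ • b i) =
      2 * (‖p‖ ^ 2 * ∑ i, B (b i) (b i) - B p p) := by
  have hexpand : ∀ i j, B (⟪b i, p⟫_ℝ • b j - ⟪b j, p⟫_ℝ • b i)
      (⟪b i, p⟫_ℝ • b j - ⟪b j, p⟫_ℝ • b i) =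
        ⟪b i, p⟫_ℝ ^ 2 * B (b j) (b j) + ⟪b j, p⟫_ℝ ^ 2 * B (b i) (b i) -
          ⟪b i, p⟫_ℝ * ⟪b j, p⟫_ℝ * B (b i) (b j) - ⟪b j, p⟫_ℝ * ⟪b i, p⟫_ℝ * B (b j) (b i) := by
    intro i j
    simp only [map_sub, map_smul, _root_.sub_apply, _root_.smul_apply, smul_eq_mul]
    ring
  have hnorm : ∑ i, ⟪b i, p⟫_ℝ ^ 2 = ‖p‖ ^ 2 := by
    simpa using b.sum_sq_norm_inner_right p
  simp only [hexpand, Finset.sum_sub_distrib, Finset.sum_add_distrib]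
  rw [Finset.sum_comm (f := fun i j => ⟪b j, p⟫_ℝ * ⟪b i, p⟫_ℝ * B (b j) (b i)),
    Finset.sum_comm (f := fun i j => ⟪b j, p⟫_ℝ ^ 2 * B (b i) (b i)),
    sum_sum_inner_mul_inner_mul_apply, ← Finset.sum_mul_sum, hnorm]
  ring

variable {B : E →L[ℝ] E →L[ℝ] ℝ}

theorem graphTrace_nonneg (hB : ∀ v, 0 ≤ B v v) : 0 ≤ graphTrace b p B := by
  have htrace : 0 ≤ ∑ i, B (b i) (b i) := Finset.sum_nonneg fun i _ => hB _
  have hwedge : 0 ≤ 2 * (‖p‖ ^ 2 * ∑ i, B (b i) (b i) - B p p) := by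
    rw [← sum_sum_apply_wedge]
    exact Finset.sum_nonneg fun i _ => Finset.sum_nonneg fun j _ => hB _
  rw [graphTrace_apply, sub_nonneg, div_le_iff₀ (by positivity)]
  linarith

theorem graphTrace_nonpos (hB : ∀ v, B v v ≤ 0) : graphTrace b p B ≤ 0 := by
  have hneg : 0 ≤ graphTrace b p ((-1 : ℝ) • B) :=
    graphTrace_nonneg b p fun v => by simpa using hB v
  rw [map_smul, smul_eq_mul] at hneg
  linarith

/-- The inner product as a bilinear form over `ℝ`. Unlike `innerSL ℝ`, it is not typed as
conjugate-linear in its first argument, so it can serve as a Hessian. -/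
noncomputable def innerForm (E : Type*) [NormedAddCommGroup E] [InnerProductSpace ℝ E] :
    E →L[ℝ] E →L[ℝ] ℝ :=
  isBoundedBilinearMap_inner.toContinuousLinearMap

@[simp]
theorem innerForm_apply (v w : E) : innerForm E v w = ⟪v, w⟫_ℝ := rfl

theorem graphTrace_innerForm :
    graphTrace b p (innerForm E) = Fintype.card ι - ‖p‖ ^ 2 / (1 + ‖p‖ ^ 2) := by
  simp [graphTrace_apply]

theorem graphTrace_smulRight_self {ℓ : E →L[ℝ] ℝ} {v : E} (hℓ : ∀ w, ℓ w = ⟪v, w⟫_ℝ) :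
    graphTrace b p (ℓ.smulRight ℓ) = ‖v‖ ^ 2 - ⟪v, p⟫_ℝ ^ 2 / (1 + ‖p‖ ^ 2) := by
  have hnorm : ∑ i, ⟪v, b i⟫_ℝ ^ 2 = ‖v‖ ^ 2 := by
    simpa using b.sum_sq_norm_inner_left v
  simp only [graphTrace_apply, ContinuousLinearMap.smulRight_apply, _root_.smul_apply, hℓ,
    smul_eq_mul, ← pow_two, hnorm]

theorem graphTrace_smul_smulRight_smul (r s : ℝ) (ℓ : E →L[ℝ] ℝ) :
    graphTrace b p ((r • ℓ).smulRight (s • ℓ)) = r * s * graphTrace b p (ℓ.smulRight ℓ) := by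
  simp only [graphTrace_apply, ContinuousLinearMap.smulRight_apply, _root_.smul_apply,
    smul_eq_mul, mul_sub, Finset.mul_sum]
  congr 1
  · exact Finset.sum_congr rfl fun i _ => by ring
  · ring

theorem hasDerivAt_graphTrace {q : ℝ → E} {C : ℝ → E →L[ℝ] E →L[ℝ] ℝ} {q' : E}
    {C' : E →L[ℝ] E →L[ℝ] ℝ} {s : ℝ} (hq : HasDerivAt q q' s) (hC : HasDerivAt C C' s) :
    HasDerivAt (fun r => graphTrace b (q r) (C r))
      (graphTrace b (q s) C' - (C s q' (q s) + C s (q s) q') / (1 + ‖q s‖ ^ 2) +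
        C s (q s) (q s) * (2 * ⟪q s, q'⟫_ℝ) / (1 + ‖q s‖ ^ 2) ^ 2) s := by
  have hden : 1 + ‖q s‖ ^ 2 ≠ 0 := by positivity
  have htrace : HasDerivAt (fun r => ∑ i, C r (b i) (b i)) (∑ i, C' (b i) (b i)) s :=
    HasDerivAt.fun_sum fun i _ => by
      simpa using (hC.clm_apply (hasDerivAt_const s (b i))).clm_apply (hasDerivAt_const s (b i))
  have hquad := (hC.clm_apply hq).clm_apply hq
  refine (htrace.sub (hquad.div (hq.norm_sq.const_add 1) hden)).congr_deriv ?_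
  simp only [graphTrace_apply, _root_.add_apply]
  field_simp
  ring

-- The case of `q = ∇f` and `C = D²f` along a line in the direction `e` of `∇f`, where `q' = D²f e`.
theorem hasDerivAt_graphTrace_of_eq_smul {q : ℝ → E} {C : ℝ → E →L[ℝ] E →L[ℝ] ℝ} {q' e : E}
    {C' : E →L[ℝ] E →L[ℝ] ℝ} {s h : ℝ} (hq : HasDerivAt q q' s) (hC : HasDerivAt C C' s)
    (hsymm : ∀ v w, C s v w = C s w v) (he : q s = h • e) (hq' : ∀ v, C s e v = ⟪q', v⟫_ℝ) :
    HasDerivAt (fun r => graphTrace b (q r) (C r))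
      (graphTrace b (q s) C' - 2 * h / (1 + ‖q s‖ ^ 2) *
        graphTrace b (q s) ((C s e).smulRight (C s e))) s := by
  have hleft (v : E) : C s (q s) v = h * ⟪q', v⟫_ℝ := by
    rw [he, map_smul, _root_.smul_apply, hq', smul_eq_mul]
  refine (hasDerivAt_graphTrace b hq hC).congr_deriv ?_
  rw [hsymm q', hleft, hleft, graphTrace_smulRight_self b _ hq', real_inner_self_eq_norm_sq,
    real_inner_comm]
  field_simp
  ring

end Trace

section Jet

variable {E : Type*} [NormedAddCommGroup E] [NormedSpace ℝ E]

/-- `F` has time derivative `τ`, spatial differential `ℓ` and spatial Hessian `B` at `(t, x)`.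
Nothing is required of mixed derivatives. -/
structure HasParabolicJetAt (F : ℝ → E → ℝ) (τ : ℝ) (ℓ : E →L[ℝ] ℝ) (B : E →L[ℝ] E →L[ℝ] ℝ)
    (t : ℝ) (x : E) : Prop where
  time : HasDerivAt (fun s => F s x) τ t
  space : ∃ D : E → E →L[ℝ] ℝ, D x = ℓ ∧ (∀ᶠ y in 𝓝 x, HasFDerivAt (F t) (D y) y) ∧
    HasFDerivAt D B x

namespace HasParabolicJetAt

variable {F G : ℝ → E → ℝ} {τ σ t : ℝ} {ℓ m : E →L[ℝ] ℝ} {B C : E →L[ℝ] E →L[ℝ] ℝ} {x : E}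

theorem const_add (c : ℝ) (hF : HasParabolicJetAt F τ ℓ B t x) :
    HasParabolicJetAt (fun s y => c + F s y) τ ℓ B t x := by
  obtain ⟨D, hDx, hD, hD'⟩ := hF.space
  exact ⟨hF.time.const_add c, D, hDx, hD.mono fun y hy => hy.const_add c, hD'⟩

theorem sub_const (hF : HasParabolicJetAt F τ ℓ B t x) (c : ℝ) :
    HasParabolicJetAt (fun s y => F s y - c) τ ℓ B t x := by
  obtain ⟨D, hDx, hD, hD'⟩ := hF.space
  exact ⟨hF.time.sub_const c, D, hDx, hD.mono fun y hy => hy.sub_const c, hD'⟩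

theorem sub (hF : HasParabolicJetAt F τ ℓ B t x) (hG : HasParabolicJetAt G σ m C t x) :
    HasParabolicJetAt (fun s y => F s y - G s y) (τ - σ) (ℓ - m) (B - C) t x := by
  obtain ⟨D, rfl, hD, hD'⟩ := hF.space
  obtain ⟨K, rfl, hK, hK'⟩ := hG.space
  refine ⟨hF.time.sub hG.time, D - K, rfl, ?_, hD'.sub hK'⟩
  filter_upwards [hD, hK] with y hy hy' using hy.sub hy'

theorem mul (hF : HasParabolicJetAt F τ ℓ B t x) (hG : HasParabolicJetAt G σ m C t x) :
    HasParabolicJetAt (fun s y => F s y * G s y) (τ * G t x + F t x * σ)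
      (F t x • m + G t x • ℓ)
      (F t x • C + ℓ.smulRight m + (G t x • B + m.smulRight ℓ)) t x := by
  obtain ⟨D, rfl, hD, hD'⟩ := hF.space
  obtain ⟨K, rfl, hK, hK'⟩ := hG.space
  refine ⟨hF.time.mul hG.time, fun y => F t y • K y + G t y • D y, rfl, ?_, ?_⟩
  · filter_upwards [hD, hK] with y hy hy' using hy.mul hy'
  · exact (hD.self_of_nhds.smul hK').add (hK.self_of_nhds.smul hD')

theorem sq (hF : HasParabolicJetAt F τ ℓ B t x) :
    HasParabolicJetAt (fun s y => F s y ^ 2) (2 * F t x * τ) ((2 * F t x) • ℓ)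
      ((2 * F t x) • B + (2 : ℝ) • ℓ.smulRight ℓ) t x := by
  simp only [pow_two]
  convert hF.mul hF using 1
  · ring
  · module
  · module

theorem eq_zero_of_isLocalMax (hF : HasParabolicJetAt F τ ℓ B t x) (hmax : IsLocalMax (F t) x) :
    ℓ = 0 := by
  obtain ⟨D, rfl, hD, -⟩ := hF.space
  exact hmax.hasFDerivAt_eq_zero hD.self_of_nhds

theorem apply_self_nonpos_of_isLocalMax (hF : HasParabolicJetAt F τ ℓ B t x)
    (hmax : IsLocalMax (F t) x) (v : E) : B v v ≤ 0 := by
  obtain ⟨D, rfl, hD, hD'⟩ := hF.space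
  have hline (r : ℝ) : HasDerivAt (fun r : ℝ => x + r • v) v r := by
    simpa using ((hasDerivAt_id r).smul_const v).const_add x
  have hbase : x + (0 : ℝ) • v = x := by simp
  have htendsto : Tendsto (fun r : ℝ => x + r • v) (𝓝 0) (𝓝 x) := by
    simpa only [hbase] using (hline 0).continuousAt.tendsto
  have hfirst : ∀ᶠ r in 𝓝 (0 : ℝ),
      HasDerivAt (fun r : ℝ => F t (x + r • v)) (D (x + r • v) v) r :=
    (htendsto.eventually hD).mono fun r hr => hr.comp_hasDerivAt r (hline r)
  have hsecond : HasDerivAt (fun r : ℝ => D (x + r • v) v) (B v v) 0 := by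
    have := (hD'.comp_hasDerivAt_of_eq 0 (hline 0) hbase.symm).clm_apply (hasDerivAt_const 0 v)
    simpa using this
  have hlinemax : IsLocalMax (fun r : ℝ => F t (x + r • v)) 0 := by
    filter_upwards [htendsto.eventually hmax] with r hr
    simpa only [hbase] using hr
  have hderiv : deriv (fun r : ℝ => F t (x + r • v)) =ᶠ[𝓝 0] fun r => D (x + r • v) v :=
    hfirst.mono fun r hr => hr.deriv
  rw [← hsecond.deriv, ← hderiv.deriv_eq]
  exact deriv_deriv_nonpos_of_isLocalMax hlinemax hfirst.self_of_nhds.continuousAt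

end HasParabolicJetAt

end Jet

section MaximumPrinciple

variable {ι E : Type*} [Fintype ι] [NormedAddCommGroup E] [InnerProductSpace ℝ E]

/-- `F` is touched from below at `(t, x)`, backwards in time, by a function `G` which, if its
spatial differential vanishes there, satisfies `∂ₜG ≤ graphTrace b p (D²G)` for some `p`. -/
def IsBarrierSubsolutionAt (b : OrthonormalBasis ι ℝ E) (F : ℝ → E → ℝ) (t : ℝ) (x : E) : Prop :=
  ∃ (G : ℝ → E → ℝ) (τ : ℝ) (ℓ : E →L[ℝ] ℝ) (B : E →L[ℝ] E →L[ℝ] ℝ) (p : E),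
    HasParabolicJetAt G τ ℓ B t x ∧ G t x = F t x ∧ (∀ᶠ s in 𝓝[≤] t, G s x ≤ F s x) ∧
      (∀ᶠ y in 𝓝 x, G t y ≤ F t y) ∧ (ℓ = 0 → τ ≤ graphTrace b p B)

theorem IsBarrierSubsolutionAt.not_isLocalMaxOn_sub_mul {b : OrthonormalBasis ι ℝ E}
    {F : ℝ → E → ℝ} {t ε : ℝ} {x : E} (hε : 0 < ε) (hF : IsBarrierSubsolutionAt b F t x)
    (hspace : IsLocalMax (F t) x) :
    ¬IsLocalMaxOn (fun s => F s x - ε * s) (Iic t) t := by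
  intro htime
  obtain ⟨G, τ, ℓ, B, p, hG, hGF, htime_le, hspace_le, hsub⟩ := hF
  have hGspace : IsLocalMax (G t) x := by
    filter_upwards [hspace, hspace_le] with y hy hy'
    linarith
  have hGtime : IsLocalMaxOn (fun s => G s x - ε * s) (Iic t) t := by
    filter_upwards [htime, htime_le] with s hs hs'
    linarith
  have hτ : 0 ≤ τ - ε * 1 := nonneg_of_isLocalMaxOn_Iic_of_hasDerivAt hGtime
    (hG.time.sub ((hasDerivAt_id t).const_mul ε))
  have htrace := graphTrace_nonpos b p (hG.apply_self_nonpos_of_isLocalMax hGspace)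
  linarith [hsub (hG.eq_zero_of_isLocalMax hGspace)]

theorem le_of_isBarrierSubsolutionAt (b : OrthonormalBasis ι ℝ E) {F : ℝ → E → ℝ}
    {t₀ t₁ m : ℝ} {K : Set E} (hK : IsCompact K)
    (hcont : ContinuousOn (fun z : ℝ × E => F z.1 z.2) (Icc t₀ t₁ ×ˢ K))
    (hinit : ∀ x ∈ K, F t₀ x ≤ m) (hlat : ∀ t ∈ Icc t₀ t₁, ∀ x ∈ frontier K, F t x ≤ m)
    (hsub : ∀ t ∈ Ioc t₀ t₁, ∀ x ∈ interior K, m < F t x → IsBarrierSubsolutionAt b F t x)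
    {t : ℝ} (ht : t ∈ Icc t₀ t₁) {x : E} (hx : x ∈ K) : F t x ≤ m := by
  by_contra! hgt
  obtain ⟨ε, hε, hεm⟩ := exists_pos_mul_lt (sub_pos.2 hgt) (t - t₀)
  obtain ⟨⟨s, y⟩, ⟨hs, hy⟩, hmax⟩ := (isCompact_Icc.prod hK).exists_isMaxOn ⟨(t, x), ht, hx⟩
    (hcont.sub (continuousOn_const.mul continuousOn_fst) :
      ContinuousOn (fun z : ℝ × E => F z.1 z.2 - ε * z.1) (Icc t₀ t₁ ×ˢ K))
  have hle (r : ℝ) (z : E) (hr : r ∈ Icc t₀ t₁) (hz : z ∈ K) :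
      F r z - ε * r ≤ F s y - ε * s := hmax (show (r, z) ∈ Icc t₀ t₁ ×ˢ K from ⟨hr, hz⟩)
  have hFm : m < F s y := by
    nlinarith [hle t x ht hx, hs.1]
  have hs₀ : t₀ < s := hs.1.lt_of_ne (by rintro rfl; exact hFm.not_ge (hinit y hy))
  have hyint : y ∈ interior K := by
    by_contra hy'
    exact hFm.not_ge (hlat s hs y ⟨subset_closure hy, hy'⟩)
  refine (hsub s ⟨hs₀, hs.2⟩ y hyint hFm).not_isLocalMaxOn_sub_mul hε ?_ ?_
  · filter_upwards [mem_interior_iff_mem_nhds.1 hyint] with z hz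
    linarith [hle s z hs hz]
  · filter_upwards [Ioc_mem_nhdsLE hs₀] with r hr
    exact hle r y ⟨hr.1.le, hr.2.trans hs.2⟩ hy

end MaximumPrinciple

section Calculus

variable {E F : Type*} [NormedAddCommGroup E] [NormedSpace ℝ E] [NormedAddCommGroup F]
  [NormedSpace ℝ F]

theorem differentiableAt_fderiv {f : E → F} {x : E} (hf : ContDiffAt ℝ 2 f x) :
    DifferentiableAt ℝ (fderiv ℝ f) x :=
  (hf.fderiv_right (m := 1) le_rfl).differentiableAt one_ne_zero

theorem hasFDerivAt_fderiv_apply {f : E → F} {x : E} (hf : ContDiffAt ℝ 2 f x) (e : E) :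
    HasFDerivAt (fun y => fderiv ℝ f y e) (fderiv ℝ (fderiv ℝ f) x e) x := by
  refine ((differentiableAt_fderiv hf).hasFDerivAt.clm_apply
    (hasFDerivAt_const e x)).congr_fderiv ?_
  ext v
  simpa using hf.isSymmSndFDerivAt (by simp) v e

theorem hasLineDerivAt_fderiv {f : E → F} {x : E} (hf : ContDiffAt ℝ 2 f x) (e : E) :
    HasLineDerivAt ℝ (fderiv ℝ f) (fderiv ℝ (fderiv ℝ f) x e) x e :=
  (differentiableAt_fderiv hf).hasFDerivAt.hasLineDerivAt e

variable {u : ℝ → E → F} {t : ℝ} {x : E}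

theorem hasFDerivAt_of_uncurry (hu : DifferentiableAt ℝ (Function.uncurry u) (t, x)) :
    HasFDerivAt (u t)
      ((fderiv ℝ (Function.uncurry u) (t, x)).comp (ContinuousLinearMap.inr ℝ ℝ E)) x :=
  hu.hasFDerivAt.comp x (hasFDerivAt_prodMk_right t x)

theorem hasDerivAt_of_uncurry (hu : DifferentiableAt ℝ (Function.uncurry u) (t, x)) :
    HasDerivAt (fun s => u s x) (fderiv ℝ (Function.uncurry u) (t, x) (1, 0)) t :=
  HasFDerivAt.comp_hasDerivAt (f := fun s => (s, x)) t hu.hasFDerivAt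
    ((hasDerivAt_id t).prodMk (hasDerivAt_const t x))

theorem fderiv_apply_eq_fderiv_uncurry (hu : DifferentiableAt ℝ (Function.uncurry u) (t, x))
    (e : E) : fderiv ℝ (u t) x e = fderiv ℝ (Function.uncurry u) (t, x) (0, e) := by
  simp [(hasFDerivAt_of_uncurry hu).fderiv]

theorem contDiffAt_of_uncurry {k : WithTop ℕ∞}
    (hu : ContDiffAt ℝ k (Function.uncurry u) (t, x)) : ContDiffAt ℝ k (u t) x :=
  hu.comp x (contDiffAt_const.prodMk contDiffAt_id)

theorem eventually_differentiableAt_uncurry (hu : ContDiffAt ℝ 2 (Function.uncurry u) (t, x)) :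
    ∀ᶠ z in 𝓝 (t, x), DifferentiableAt ℝ (Function.uncurry u) z :=
  (hu.eventually (by simp)).mono fun _ hz => hz.differentiableAt two_ne_zero

theorem hasDerivAt_fderiv_apply_of_hasLineDerivAt_deriv {d : F} {e : E}
    (hu : ContDiffAt ℝ 2 (Function.uncurry u) (t, x))
    (hd : HasLineDerivAt ℝ (fun y => deriv (fun s => u s y) t) d x e) :
    HasDerivAt (fun s => fderiv ℝ (u s) x e) d t := by
  have hdiff := eventually_differentiableAt_uncurry hu
  have htime : HasDerivAt (fun s => fderiv ℝ (u s) x e)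
      (fderiv ℝ (fderiv ℝ (Function.uncurry u)) (t, x) (0, e) (1, 0)) t := by
    refine ((hasFDerivAt_fderiv_apply hu (0, e)).comp_hasDerivAt t
      ((hasDerivAt_id t).prodMk (hasDerivAt_const t x))).congr_of_eventuallyEq ?_
    filter_upwards [(by fun_prop : ContinuousAt (fun s => (s, x)) t).eventually hdiff] with s hs
    exact fderiv_apply_eq_fderiv_uncurry hs e
  have hline : HasLineDerivAt ℝ (fun y => deriv (fun s => u s y) t)
      (fderiv ℝ (fderiv ℝ (Function.uncurry u)) (t, x) (1, 0) (0, e)) x e := by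
    have hspace : HasFDerivAt (fun y => fderiv ℝ (Function.uncurry u) (t, y) (1, 0)) _ x :=
      (hasFDerivAt_fderiv_apply hu (1, 0)).comp x (hasFDerivAt_prodMk_right t x)
    refine (hspace.congr_of_eventuallyEq ?_).hasLineDerivAt e
    filter_upwards [(by fun_prop : ContinuousAt (fun y => (t, y)) x).eventually hdiff] with y hy
    exact (hasDerivAt_of_uncurry hy).deriv
  rw [hd.unique hline, hu.isSymmSndFDerivAt (by simp)]
  exact htime

theorem HasParabolicJetAt.of_contDiffAt {u : ℝ → E → ℝ}
    (hu : ContDiffAt ℝ 2 (Function.uncurry u) (t, x)) :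
    HasParabolicJetAt u (deriv (fun s => u s x) t) (fderiv ℝ (u t) x)
      (fderiv ℝ (fderiv ℝ (u t)) x) t x := by
  have hut : ContDiffAt ℝ 2 (u t) x := contDiffAt_of_uncurry hu
  refine ⟨?_, fderiv ℝ (u t), rfl, ?_, ?_⟩
  · exact (hasDerivAt_of_uncurry (hu.differentiableAt two_ne_zero)).differentiableAt.hasDerivAt
  · exact (hut.eventually (by simp)).mono fun y hy =>
      (hy.differentiableAt two_ne_zero).hasFDerivAt
  · exact (differentiableAt_fderiv hut).hasFDerivAt

theorem HasParabolicJetAt.fderiv_apply {u : ℝ → E → ℝ} {d : ℝ} {e : E}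
    (hu : ContDiffAt ℝ 3 (Function.uncurry u) (t, x))
    (hd : HasLineDerivAt ℝ (fun y => deriv (fun s => u s y) t) d x e) :
    HasParabolicJetAt (fun s y => fderiv ℝ (u s) y e) d (fderiv ℝ (fderiv ℝ (u t)) x e)
      (fderiv ℝ (fderiv ℝ (fderiv ℝ (u t))) x e) t x := by
  have hut : ContDiffAt ℝ 3 (u t) x := contDiffAt_of_uncurry hu
  refine ⟨hasDerivAt_fderiv_apply_of_hasLineDerivAt_deriv (hu.of_le (by norm_num)) hd,
    fun y => fderiv ℝ (fderiv ℝ (u t)) y e, rfl, ?_, ?_⟩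
  · exact (hut.eventually (by simp)).mono fun y hy =>
      hasFDerivAt_fderiv_apply (hy.of_le (by norm_num)) e
  · exact hasFDerivAt_fderiv_apply (hut.fderiv_right (m := 2) (by norm_num)) e

end Calculus

section Barriers

variable {ι E : Type*} [Fintype ι] [NormedAddCommGroup E] [InnerProductSpace ℝ E]
  {b : OrthonormalBasis ι ℝ E} {F G u w φ : ℝ → E → ℝ} {t τ σ : ℝ} {x p : E}
  {ℓ m : E →L[ℝ] ℝ} {B C : E →L[ℝ] E →L[ℝ] ℝ}

theorem HasParabolicJetAt.isBarrierSubsolutionAt (hF : HasParabolicJetAt F τ ℓ B t x)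
    (hsub : ℓ = 0 → τ ≤ graphTrace b p B) : IsBarrierSubsolutionAt b F t x :=
  ⟨F, τ, ℓ, B, p, hF, rfl, .of_forall fun _ => le_rfl, .of_forall fun _ => le_rfl, hsub⟩

theorem IsBarrierSubsolutionAt.of_touching (hG : IsBarrierSubsolutionAt b G t x)
    (heq : G t x = F t x) (htime : ∀ᶠ s in 𝓝[≤] t, G s x ≤ F s x)
    (hspace : ∀ᶠ y in 𝓝 x, G t y ≤ F t y) : IsBarrierSubsolutionAt b F t x := by
  obtain ⟨K, τ, ℓ, B, p, hK, hKG, hKtime, hKspace, hsub⟩ := hG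
  refine ⟨K, τ, ℓ, B, p, hK, hKG.trans heq, ?_, ?_, hsub⟩
  · filter_upwards [htime, hKtime] with s hs hs' using hs'.trans hs
  · filter_upwards [hspace, hKspace] with y hy hy' using hy'.trans hy

/-- The squared radius at time `t` of the sphere shrinking by mean curvature in `ℝ^(d+1)` from
radius `R` at time `t₀`, minus the squared distance to its centre's projection `x₀ ∈ ℝ^d`. -/
def shrinkingCutoff (d R t₀ : ℝ) (x₀ : E) (t : ℝ) (x : E) : ℝ :=
  R ^ 2 - 2 * d * (t - t₀) - ‖x - x₀‖ ^ 2

omit [InnerProductSpace ℝ E] in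
theorem continuous_shrinkingCutoff (d R t₀ : ℝ) (x₀ : E) :
    Continuous fun z : ℝ × E => shrinkingCutoff d R t₀ x₀ z.1 z.2 := by
  unfold shrinkingCutoff
  fun_prop

omit [InnerProductSpace ℝ E] in
theorem shrinkingCutoff_le_sq {d R t₀ : ℝ} (hd : 0 ≤ d) {x₀ : E} (ht : t₀ ≤ t) :
    shrinkingCutoff d R t₀ x₀ t x ≤ R ^ 2 := by
  have := mul_nonneg hd (sub_nonneg.2 ht)
  have := sq_nonneg ‖x - x₀‖
  unfold shrinkingCutoff
  linarith

omit [InnerProductSpace ℝ E] in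
theorem shrinkingCutoff_nonpos_of_mem_sphere {d R t₀ : ℝ} (hd : 0 ≤ d) {x₀ : E} (ht : t₀ ≤ t)
    (hx : x ∈ sphere x₀ R) : shrinkingCutoff d R t₀ x₀ t x ≤ 0 := by
  have := mul_nonneg hd (sub_nonneg.2 ht)
  rw [shrinkingCutoff, mem_sphere_iff_norm.1 hx]
  linarith

theorem hasParabolicJetAt_shrinkingCutoff (d R t₀ : ℝ) (x₀ : E) (t : ℝ) (x : E) :
    HasParabolicJetAt (shrinkingCutoff d R t₀ x₀) (-(2 * d)) ((-2 : ℝ) • innerForm E (x - x₀))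
      ((-2 : ℝ) • innerForm E) t x := by
  refine ⟨?_, fun y => (-2 : ℝ) • innerForm E (y - x₀), rfl, .of_forall fun y => ?_, ?_⟩
  · simpa [shrinkingCutoff] using ((((hasDerivAt_id t).sub_const t₀).const_mul (2 * d)).const_sub
      (R ^ 2)).sub_const (‖x - x₀‖ ^ 2)
  · refine ((((hasFDerivAt_id y).sub_const x₀).norm_sq).const_sub
      (R ^ 2 - 2 * d * (t - t₀))).congr_fderiv ?_
    ext v
    simp
  · exact ((innerForm E).hasFDerivAt.comp x ((hasFDerivAt_id x).sub_const x₀)).const_smul (-2 : ℝ)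

theorem graphTrace_hessian_shrinkingCutoff :
    graphTrace b p ((-2 : ℝ) • innerForm E) =
      -(2 * Fintype.card ι) + 2 * (‖p‖ ^ 2 / (1 + ‖p‖ ^ 2)) := by
  rw [map_smul, graphTrace_innerForm, smul_eq_mul]
  ring

theorem isBarrierSubsolutionAt_shrinkingCutoff_sub_sq
    (hu : HasParabolicJetAt u (graphTrace b p B) ℓ B t x) (hp : ∀ v, ℓ v = ⟪p, v⟫_ℝ)
    (c R t₀ : ℝ) (x₀ : E) :
    IsBarrierSubsolutionAt b
      (fun s y => shrinkingCutoff (Fintype.card ι) R t₀ x₀ s y - (u s y - c) ^ 2) t x := by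
  refine ((hasParabolicJetAt_shrinkingCutoff _ R t₀ x₀ t x).sub
    (hu.sub_const c).sq).isBarrierSubsolutionAt (p := p) fun _ => le_of_eq ?_
  have hgrad : graphTrace b p (ℓ.smulRight ℓ) = ‖p‖ ^ 2 / (1 + ‖p‖ ^ 2) := by
    rw [graphTrace_smulRight_self b p hp, real_inner_self_eq_norm_sq]
    field_simp
    ring
  rw [graphTrace_sub, graphTrace_hessian_shrinkingCutoff, map_add, map_smul, map_smul, hgrad,
    smul_eq_mul, smul_eq_mul]
  ring

theorem isBarrierSubsolutionAt_one_add_sq_mul_sq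
    (hw : HasParabolicJetAt w (graphTrace b p B - 2 * ‖p‖ / (1 + ‖p‖ ^ 2) *
      graphTrace b p (ℓ.smulRight ℓ)) ℓ B t x) (hwp : w t x = ‖p‖)
    (hφ : HasParabolicJetAt φ σ m C t x) (hφpos : 0 < φ t x) (hφsub : σ ≤ graphTrace b p C) :
    IsBarrierSubsolutionAt b (fun s y => (1 + w s y ^ 2) * φ s y ^ 2) t x := by
  refine ((hw.sq.const_add 1).mul hφ.sq).isBarrierSubsolutionAt
    (p := p) fun hcrit => ?_
  set H := ‖p‖
  set P := φ t x
  -- At a critical point all first-order terms are multiples of `ℓ ⊗ ℓ`, and those from `D²w`, from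
  -- the commutator term of `hw` and from the cutoff add up with a favourable sign.
  have hm : m = (-(P * H / (1 + H ^ 2))) • ℓ := by
    ext v
    have hv := DFunLike.congr_fun hcrit v
    simp only [hwp, _root_.add_apply, _root_.smul_apply, smul_eq_mul,
      _root_.zero_apply] at hv ⊢
    have : P * ((1 + H ^ 2) * m v + P * H * ℓ v) = 0 := by linear_combination hv / 2
    have := (mul_eq_zero.1 this).resolve_left hφpos.ne'
    field_simp
    linarith
  have hT : 0 ≤ graphTrace b p (ℓ.smulRight ℓ) :=
    graphTrace_nonneg b p fun v => by simpa using mul_self_nonneg (ℓ v)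
  simp only [hwp, hm, map_add, map_smul, smul_smul, graphTrace_smul_smulRight_smul,
    smul_eq_mul]
  rw [← sub_nonneg]
  calc (0 : ℝ) ≤ 2 * (1 + H ^ 2) * P * (graphTrace b p C - σ) +
        2 * P ^ 2 / (1 + H ^ 2) * graphTrace b p (ℓ.smulRight ℓ) := by
        have := sub_nonneg.2 hφsub
        positivity
    _ = _ := by
        field_simp
        ring

end Barriers

section Gradient

variable {ι E : Type*} [Fintype ι] [NormedAddCommGroup E] [InnerProductSpace ℝ E] [CompleteSpace E]
  {f : E → ℝ} {x : E}

theorem exists_hasFDerivAt_gradient (hf : DifferentiableAt ℝ (fderiv ℝ f) x) :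
    ∃ A : E →L[ℝ] E, (∀ v w, fderiv ℝ (fderiv ℝ f) x v w = ⟪A v, w⟫_ℝ) ∧
      HasFDerivAt (∇ f) A x := by
  let riesz : (E →L[ℝ] ℝ) →L[ℝ] E :=
    ((toDual ℝ E).symm.toContinuousLinearEquiv : (E →L[ℝ] ℝ) →L⋆[ℝ] E)
  exact ⟨riesz.comp (fderiv ℝ (fderiv ℝ f) x), fun v w => toDual_symm_apply.symm,
    riesz.hasFDerivAt.comp x hf.hasFDerivAt⟩

theorem norm_gradient (f : E → ℝ) (x : E) : ‖∇ f x‖ = ‖fderiv ℝ f x‖ := by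
  rw [← toDual_gradient, LinearIsometryEquiv.norm_map]

theorem abs_fderiv_apply_le_norm_gradient (f : E → ℝ) (x : E) {e : E} (he : ‖e‖ ≤ 1) :
    |fderiv ℝ f x e| ≤ ‖∇ f x‖ := by
  simpa only [norm_gradient, Real.norm_eq_abs] using (fderiv ℝ f x).unit_le_opNorm e he

theorem hasLineDerivAt_graphTrace_gradient (b : OrthonormalBasis ι ℝ E) {e : E} {h : ℝ}
    (hf : ContDiffAt ℝ 3 f x) (he : ∇ f x = h • e) :
    HasLineDerivAt ℝ (fun y => graphTrace b (∇ f y) (fderiv ℝ (fderiv ℝ f) y))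
      (graphTrace b (∇ f x) (fderiv ℝ (fderiv ℝ (fderiv ℝ f)) x e) -
        2 * h / (1 + ‖∇ f x‖ ^ 2) * graphTrace b (∇ f x)
          ((fderiv ℝ (fderiv ℝ f) x e).smulRight (fderiv ℝ (fderiv ℝ f) x e))) x e := by
  have hf₂ : ContDiffAt ℝ 2 f x := hf.of_le (by norm_num)
  have hD : ContDiffAt ℝ 2 (fderiv ℝ f) x := hf.fderiv_right (by norm_num)
  obtain ⟨A, hA, hgrad⟩ := exists_hasFDerivAt_gradient (hD.differentiableAt two_ne_zero)
  have hbase : x + (0 : ℝ) • e = x := by simp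
  have hgradline : HasDerivAt (fun r : ℝ => ∇ f (x + r • e)) (A e) 0 := hgrad.hasLineDerivAt e
  have hhessline : HasDerivAt (fun r : ℝ => fderiv ℝ (fderiv ℝ f) (x + r • e))
      (fderiv ℝ (fderiv ℝ (fderiv ℝ f)) x e) 0 :=
    hasLineDerivAt_fderiv hD e
  have hsymm (v w : E) : fderiv ℝ (fderiv ℝ f) x v w = fderiv ℝ (fderiv ℝ f) x w v :=
    hf₂.isSymmSndFDerivAt (by simp) v w
  simpa only [HasLineDerivAt, hbase] using
    hasDerivAt_graphTrace_of_eq_smul b hgradline hhessline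
      (by simpa only [hbase] using hsymm)
      (by simpa only [hbase] using he)
      (by simpa only [hbase] using hA e)

end Gradient

section CoordinateGradient

variable {n : ℕ} (g : EuclideanSpace ℝ (Fin n) → ℝ) (x : EuclideanSpace ℝ (Fin n))

theorem pd_eq_inner_gradient (i : Fin n) :
    pd g x i = ⟪EuclideanSpace.basisFun (Fin n) ℝ i, ∇ g x⟫_ℝ := by
  rw [real_inner_comm, inner_gradient_left, EuclideanSpace.basisFun_apply]
  rfl

theorem gradNormSq_eq_norm_gradient_sq : gradNormSq g x = ‖∇ g x‖ ^ 2 := by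
  simp only [gradNormSq, pd_eq_inner_gradient]
  simpa using (EuclideanSpace.basisFun (Fin n) ℝ).sum_sq_norm_inner_right (∇ g x)

theorem gradNorm_eq_norm_gradient : gradNorm g x = ‖∇ g x‖ := by
  rw [gradNorm, gradNormSq_eq_norm_gradient_sq, Real.sqrt_sq (norm_nonneg _)]

variable {g x}

theorem pd2_eq_fderiv_fderiv (hg : DifferentiableAt ℝ (fderiv ℝ g) x) (i j : Fin n) :
    pd2 g x i j = fderiv ℝ (fderiv ℝ g) x (EuclideanSpace.basisFun (Fin n) ℝ i)
      (EuclideanSpace.basisFun (Fin n) ℝ j) := by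
  simp [pd2, pd, (hg.hasFDerivAt.clm_apply (hasFDerivAt_const _ x)).fderiv]

theorem mcfRHS_eq_graphTrace (hg : DifferentiableAt ℝ (fderiv ℝ g) x) :
    mcfRHS g x =
      graphTrace (EuclideanSpace.basisFun (Fin n) ℝ) (∇ g x) (fderiv ℝ (fderiv ℝ g) x) := by
  have hquad := sum_sum_inner_mul_inner_mul_apply (EuclideanSpace.basisFun (Fin n) ℝ)
    (fderiv ℝ (fderiv ℝ g) x) (∇ g x) (∇ g x)
  simp only [mcfRHS, pd_eq_inner_gradient, pd2_eq_fderiv_fderiv hg, gradNormSq_eq_norm_gradient_sq,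
    graphTrace_apply, sub_mul, ite_mul, one_mul, zero_mul, Finset.sum_sub_distrib,
    Finset.sum_ite_eq, Finset.mem_univ, if_true, ← hquad, Finset.sum_div, div_mul_eq_mul_div]

end CoordinateGradient

namespace IsGMCF

variable {n : ℕ} {I : Set ℝ} {U : Set (EuclideanSpace ℝ (Fin n))}
  {u : ℝ → EuclideanSpace ℝ (Fin n) → ℝ} {t : ℝ} {x : EuclideanSpace ℝ (Fin n)}

theorem contDiffAt (hu : IsGMCF I U u) (hI : IsOpen I) (hU : IsOpen U) (ht : t ∈ I) (hx : x ∈ U)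
    (k : ℕ) : ContDiffAt ℝ k (Function.uncurry u) (t, x) :=
  (hu.1.contDiffAt ((hI.prod hU).mem_nhds ⟨ht, hx⟩)).of_le (by exact_mod_cast le_top)

theorem deriv_eq_graphTrace (hu : IsGMCF I U u) (hI : IsOpen I) (hU : IsOpen U) (ht : t ∈ I)
    (hx : x ∈ U) : deriv (fun s => u s x) t =
      graphTrace (EuclideanSpace.basisFun (Fin n) ℝ) (∇ (u t) x)
        (fderiv ℝ (fderiv ℝ (u t)) x) := by
  have hut : ContDiffAt ℝ 2 (u t) x := contDiffAt_of_uncurry (hu.contDiffAt hI hU ht hx 2)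
  rw [hu.2 t ht x hx, mcfRHS_eq_graphTrace (differentiableAt_fderiv hut)]

theorem hasParabolicJetAt (hu : IsGMCF I U u) (hI : IsOpen I) (hU : IsOpen U) (ht : t ∈ I)
    (hx : x ∈ U) :
    HasParabolicJetAt u (graphTrace (EuclideanSpace.basisFun (Fin n) ℝ) (∇ (u t) x)
        (fderiv ℝ (fderiv ℝ (u t)) x)) (fderiv ℝ (u t) x) (fderiv ℝ (fderiv ℝ (u t)) x) t x := by
  rw [← hu.deriv_eq_graphTrace hI hU ht hx]
  exact .of_contDiffAt (hu.contDiffAt hI hU ht hx 2)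

theorem hasParabolicJetAt_fderiv_apply (hu : IsGMCF I U u) (hI : IsOpen I) (hU : IsOpen U)
    (ht : t ∈ I) (hx : x ∈ U) {e : EuclideanSpace ℝ (Fin n)} {h : ℝ} (he : ∇ (u t) x = h • e) :
    HasParabolicJetAt (fun s y => fderiv ℝ (u s) y e)
      (graphTrace (EuclideanSpace.basisFun (Fin n) ℝ) (∇ (u t) x)
          (fderiv ℝ (fderiv ℝ (fderiv ℝ (u t))) x e) -
        2 * h / (1 + ‖∇ (u t) x‖ ^ 2) * graphTrace (EuclideanSpace.basisFun (Fin n) ℝ) (∇ (u t) x)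
          ((fderiv ℝ (fderiv ℝ (u t)) x e).smulRight (fderiv ℝ (fderiv ℝ (u t)) x e)))
      (fderiv ℝ (fderiv ℝ (u t)) x e) (fderiv ℝ (fderiv ℝ (fderiv ℝ (u t))) x e) t x := by
  refine .fderiv_apply (hu.contDiffAt hI hU ht hx 3) ?_
  have hflow : (fun y => deriv (fun s => u s y) t) =ᶠ[𝓝 x] fun y =>
      graphTrace (EuclideanSpace.basisFun (Fin n) ℝ) (∇ (u t) y)
        (fderiv ℝ (fderiv ℝ (u t)) y) := by
    filter_upwards [hU.mem_nhds hx] with y hy using hu.deriv_eq_graphTrace hI hU ht hy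
  exact (hasLineDerivAt_graphTrace_gradient _
    (contDiffAt_of_uncurry (hu.contDiffAt hI hU ht hx 3)) he).congr_of_eventuallyEq hflow

end IsGMCF

theorem continuousAt_gradient_uncurry {E : Type*} [NormedAddCommGroup E] [InnerProductSpace ℝ E]
    [CompleteSpace E] {u : ℝ → E → ℝ} {t : ℝ} {x : E}
    (hu : ContDiffAt ℝ 2 (Function.uncurry u) (t, x)) :
    ContinuousAt (fun z : ℝ × E => ∇ (u z.1) z.2) (t, x) := by
  have hslice : (fun z : ℝ × E => fderiv ℝ (u z.1) z.2) =ᶠ[𝓝 (t, x)] fun z =>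
      (fderiv ℝ (Function.uncurry u) z).comp (ContinuousLinearMap.inr ℝ ℝ E) := by
    filter_upwards [eventually_differentiableAt_uncurry hu] with z hz
    exact (hasFDerivAt_of_uncurry hz).fderiv
  have hcont : ContinuousAt (fun z : ℝ × E => fderiv ℝ (u z.1) z.2) (t, x) :=
    ((differentiableAt_fderiv hu).continuousAt.clm_comp continuousAt_const).congr hslice.symm
  exact (toDual ℝ E).symm.continuous.continuousAt.comp hcont

namespace IsGMCF

variable {n : ℕ} {I : Set ℝ} {U : Set (EuclideanSpace ℝ (Fin n))}
  {u : ℝ → EuclideanSpace ℝ (Fin n) → ℝ} {t₀ t₁ R : ℝ} {x₀ : EuclideanSpace ℝ (Fin n)}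

theorem shrinkingCutoff_le_sq_sub (hu : IsGMCF I U u) (hI : IsOpen I) (hU : IsOpen U)
    (hIcc : Icc t₀ t₁ ⊆ I) (hball : closedBall x₀ R ⊆ U) {c : ℝ}
    (hinit : ∀ x ∈ closedBall x₀ R, R ^ 2 ≤ (u t₀ x - c) ^ 2) {t : ℝ} (ht : t ∈ Icc t₀ t₁)
    {x : EuclideanSpace ℝ (Fin n)} (hx : x ∈ closedBall x₀ R) :
    shrinkingCutoff n R t₀ x₀ t x ≤ (u t x - c) ^ 2 := by
  have hmax := le_of_isBarrierSubsolutionAt (EuclideanSpace.basisFun (Fin n) ℝ) (m := 0)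
    (F := fun s y => shrinkingCutoff n R t₀ x₀ s y - (u s y - c) ^ 2)
    (isCompact_closedBall x₀ R) (t₁ := t₁) ?_ ?_ ?_ ?_ ht hx
  · exact sub_nonpos.1 hmax
  · have hcont : ContinuousOn (fun z : ℝ × _ => u z.1 z.2) (Icc t₀ t₁ ×ˢ closedBall x₀ R) :=
      hu.1.continuousOn.mono (prod_mono hIcc hball)
    exact (continuous_shrinkingCutoff n R t₀ x₀).continuousOn.sub
      ((hcont.sub continuousOn_const).pow 2)
  · intro y hy
    exact sub_nonpos.2 ((shrinkingCutoff_le_sq n.cast_nonneg le_rfl).trans (hinit y hy))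
  · intro s hs y hy
    have := shrinkingCutoff_nonpos_of_mem_sphere (d := n) (t₀ := t₀) n.cast_nonneg hs.1
      (frontier_closedBall_subset_sphere hy)
    linarith [sq_nonneg (u s y - c)]
  · intro s hs y hy _
    have hyU : y ∈ U := hball (interior_subset hy)
    simpa only [Fintype.card_fin] using isBarrierSubsolutionAt_shrinkingCutoff_sub_sq
      (hu.hasParabolicJetAt hI hU (hIcc ⟨hs.1.le, hs.2⟩) hyU)
      (fun v => (inner_gradient_left ..).symm) c R t₀ x₀

theorem abs_le_add (hu : IsGMCF I U u) (hI : IsOpen I) (hU : IsOpen U)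
    (hIcc : Icc t₀ t₁ ⊆ I) (hR : 0 < R) (hball : closedBall x₀ R ⊆ U) {M : ℝ}
    (hinit : ∀ x ∈ closedBall x₀ R, |u t₀ x| ≤ M) (ht : t₀ ≤ t₁)
    (hlife : 2 * n * (t₁ - t₀) < R ^ 2) : |u t₁ x₀| ≤ M + R := by
  have hx₀ : x₀ ∈ closedBall x₀ R := mem_closedBall_self hR.le
  by_contra! hgt
  have hcont : ContinuousOn (fun s => |u s x₀|) (Icc t₀ t₁) :=
    (hu.1.continuousOn.comp (by fun_prop : ContinuousOn (fun s => (s, x₀)) (Icc t₀ t₁))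
      fun s hs => ⟨hIcc hs, hball hx₀⟩).abs
  obtain ⟨s, hs, hsx₀⟩ : ∃ s ∈ Icc t₀ t₁, |u s x₀| = M + R :=
    intermediate_value_Icc ht hcont ⟨by linarith [hinit x₀ hx₀], hgt.le⟩
  have hfar (y) (hy : y ∈ closedBall x₀ R) : R ^ 2 ≤ (u t₀ y - u s x₀) ^ 2 := by
    have := abs_sub_abs_le_abs_sub (u s x₀) (u t₀ y)
    rw [sq_le_sq, abs_of_pos hR, abs_sub_comm]
    linarith [hinit y hy]
  have hcut := hu.shrinkingCutoff_le_sq_sub hI hU hIcc hball hfar hs hx₀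
  have htime : 2 * n * (s - t₀) ≤ 2 * n * (t₁ - t₀) := by gcongr; exact hs.2
  simp only [shrinkingCutoff, sub_self, norm_zero] at hcut
  linarith

theorem isBarrierSubsolutionAt_gradient (hu : IsGMCF I U u) (hI : IsOpen I) (hU : IsOpen U)
    {t : ℝ} (ht : t ∈ I) {x : EuclideanSpace ℝ (Fin n)} (hx : x ∈ U)
    (hpos : 0 < shrinkingCutoff n R t₀ x₀ t x) :
    IsBarrierSubsolutionAt (EuclideanSpace.basisFun (Fin n) ℝ)
      (fun s y => (1 + ‖∇ (u s) y‖ ^ 2) * max (shrinkingCutoff n R t₀ x₀ s y) 0 ^ 2) t x := by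
  set e := ‖∇ (u t) x‖⁻¹ • ∇ (u t) x with he
  have he_norm : ‖e‖ ≤ 1 := by
    rw [he, norm_smul, norm_inv, norm_norm]
    exact inv_mul_le_one
  have hdir : ∇ (u t) x = ‖∇ (u t) x‖ • e := by
    rcases eq_or_ne (∇ (u t) x) 0 with h | h
    · simp [h]
    · rw [he, smul_inv_smul₀ (norm_ne_zero_iff.2 h)]
  have hwp : fderiv ℝ (u t) x e = ‖∇ (u t) x‖ := by
    rw [← inner_gradient_left, he, real_inner_smul_right, real_inner_self_eq_norm_mul_norm,
      ← mul_assoc, inv_mul_mul_self]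
  have htouch (s y) (hsy : 0 < shrinkingCutoff n R t₀ x₀ s y) :
      (1 + fderiv ℝ (u s) y e ^ 2) * shrinkingCutoff n R t₀ x₀ s y ^ 2 ≤
        (1 + ‖∇ (u s) y‖ ^ 2) * max (shrinkingCutoff n R t₀ x₀ s y) 0 ^ 2 := by
    have hsq : fderiv ℝ (u s) y e ^ 2 ≤ ‖∇ (u s) y‖ ^ 2 :=
      sq_le_sq.2 (by simpa only [abs_norm] using abs_fderiv_apply_le_norm_gradient (u s) y he_norm)
    rw [max_eq_left hsy.le]
    gcongr
  have hφ := continuous_shrinkingCutoff n R t₀ x₀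
  refine (isBarrierSubsolutionAt_one_add_sq_mul_sq
    (hu.hasParabolicJetAt_fderiv_apply hI hU ht hx hdir) hwp
    (hasParabolicJetAt_shrinkingCutoff n R t₀ x₀ t x) hpos ?_).of_touching ?_ ?_ ?_
  · rw [graphTrace_hessian_shrinkingCutoff, Fintype.card_fin, le_add_iff_nonneg_right]
    positivity
  · rw [hwp, max_eq_left hpos.le]
  · have : ∀ᶠ s in 𝓝 t, 0 < shrinkingCutoff n R t₀ x₀ s x :=
      (hφ.comp (by fun_prop : Continuous fun s => (s, x))).continuousAt.eventually_const_lt hpos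
    exact (this.filter_mono nhdsWithin_le_nhds).mono fun s hs => htouch s x hs
  · have : ∀ᶠ y in 𝓝 x, 0 < shrinkingCutoff n R t₀ x₀ t y :=
      (hφ.comp (by fun_prop : Continuous fun y => (t, y))).continuousAt.eventually_const_lt hpos
    exact this.mono fun y hy => htouch t y hy

theorem one_add_norm_gradient_sq_mul_le (hu : IsGMCF I U u) (hI : IsOpen I) (hU : IsOpen U)
    (hIcc : Icc t₀ t₁ ⊆ I) (hball : closedBall x₀ R ⊆ U) {L : ℝ}
    (hinit : ∀ x ∈ closedBall x₀ R, ‖∇ (u t₀) x‖ ≤ L) {t : ℝ} (ht : t ∈ Icc t₀ t₁)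
    {x : EuclideanSpace ℝ (Fin n)} (hx : x ∈ closedBall x₀ R) :
    (1 + ‖∇ (u t) x‖ ^ 2) * max (shrinkingCutoff n R t₀ x₀ t x) 0 ^ 2 ≤
      (1 + L ^ 2) * (R ^ 2) ^ 2 := by
  refine le_of_isBarrierSubsolutionAt (EuclideanSpace.basisFun (Fin n) ℝ)
    (F := fun s y => (1 + ‖∇ (u s) y‖ ^ 2) * max (shrinkingCutoff n R t₀ x₀ s y) 0 ^ 2)
    (isCompact_closedBall x₀ R) ?_ ?_ ?_ ?_ ht hx
  · have hgrad : ContinuousOn (fun z : ℝ × _ => ∇ (u z.1) z.2) (Icc t₀ t₁ ×ˢ closedBall x₀ R) :=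
      fun z hz => (continuousAt_gradient_uncurry
        (hu.contDiffAt hI hU (hIcc hz.1) (hball hz.2) 2)).continuousWithinAt
    exact (continuousOn_const.add (hgrad.norm.pow 2)).mul
      (((continuous_shrinkingCutoff n R t₀ x₀).max continuous_const).pow 2).continuousOn
  · intro y hy
    gcongr
    · exact hinit y hy
    · exact max_le (shrinkingCutoff_le_sq n.cast_nonneg le_rfl) (sq_nonneg R)
  · intro s hs y hy
    rw [max_eq_right (shrinkingCutoff_nonpos_of_mem_sphere n.cast_nonneg hs.1
      (frontier_closedBall_subset_sphere hy)), zero_pow two_ne_zero, mul_zero]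
    positivity
  · intro s hs y hy hlt
    refine hu.isBarrierSubsolutionAt_gradient hI hU (hIcc ⟨hs.1.le, hs.2⟩)
      (hball (interior_subset hy)) ?_
    by_contra! hneg
    rw [max_eq_right hneg, zero_pow two_ne_zero, mul_zero] at hlt
    exact hlt.not_ge (by positivity)

theorem one_add_norm_gradient_sq_le (hu : IsGMCF I U u) (hI : IsOpen I) (hU : IsOpen U)
    (hIcc : Icc t₀ t₁ ⊆ I) (hR : 0 < R) (hball : closedBall x₀ R ⊆ U) {L : ℝ}
    (hinit : ∀ x ∈ closedBall x₀ R, ‖∇ (u t₀) x‖ ≤ L) (ht : t₀ ≤ t₁)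
    (hlife : 2 * n * (t₁ - t₀) ≤ R ^ 2 / 4) :
    1 + ‖∇ (u t₁) x₀‖ ^ 2 ≤ 16 / 9 * (1 + L ^ 2) := by
  have hcut : 3 / 4 * R ^ 2 ≤ max (shrinkingCutoff n R t₀ x₀ t₁ x₀) 0 := by
    refine le_max_of_le_left ?_
    rw [shrinkingCutoff, sub_self, norm_zero]
    linarith
  have hbound : (1 + ‖∇ (u t₁) x₀‖ ^ 2) * (3 / 4 * R ^ 2) ^ 2 ≤ (1 + L ^ 2) * (R ^ 2) ^ 2 := by
    refine le_trans ?_ (hu.one_add_norm_gradient_sq_mul_le hI hU hIcc hball hinit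
      (right_mem_Icc.2 ht) (mem_closedBall_self hR.le))
    gcongr
  refine le_of_mul_le_mul_right ?_ (by positivity : 0 < (3 / 4 * R ^ 2) ^ 2)
  linarith

end IsGMCF

theorem gradNorm_le_four_mul {n : ℕ} {g : EuclideanSpace ℝ (Fin n) → ℝ}
    {x : EuclideanSpace ℝ (Fin n)} {L : ℝ} (hL : 1 ≤ L)
    (h : 1 + gradNormSq g x ≤ 16 / 9 * (1 + L ^ 2)) : gradNorm g x ≤ 4 * L :=
  (Real.sqrt_le_left (by linarith)).2 (by nlinarith)

theorem maintaingraphlem_general (n : ℕ) :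
    ∃ lam ∈ Ioo (0 : ℝ) 1, ∀ (ρ R : ℝ), 0 < R → ∀ (s₀ : ℝ)
      (u : ℝ → EuclideanSpace ℝ (Fin n) → ℝ) (M L : ℝ),
      IsGMCF (Ioo (s₀ - R ^ 2) (s₀ + lam ^ 2 * R ^ 2)) (ball 0 (ρ + R)) u →
      (∀ t ∈ Ioo (s₀ - R ^ 2) s₀, ∀ x ∈ ball 0 (ρ + R), |u t x| ≤ M) →
      (∀ t ∈ Ioo (s₀ - R ^ 2) s₀, ∀ x ∈ ball 0 (ρ + R), gradNorm (u t) x ≤ L) →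
      ∀ t ∈ Ioo s₀ (s₀ + lam ^ 2 * R ^ 2), ∀ x ∈ ball 0 ρ,
        |u t x| ≤ M + R ∧ 1 + gradNormSq (u t) x ≤ 16 / 9 * (1 + L ^ 2) := by
  obtain ⟨lam, hlam, hlam_sq⟩ : ∃ lam ∈ Ioo (0 : ℝ) 1, 4 * n * lam ^ 2 ≤ 1 / 4 := by
    refine ⟨1 / (4 * (n + 1)), ⟨by positivity, ?_⟩, ?_⟩
    · rw [div_lt_one (by positivity)]
      linarith [n.cast_nonneg (α := ℝ)]
    · rw [one_div_pow, mul_one_div, div_le_div_iff₀ (by positivity) (by norm_num)]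
      nlinarith [n.cast_nonneg (α := ℝ)]
  refine ⟨lam, hlam, fun ρ R hR s₀ u M L hu hM hL t ht x hx => ?_⟩
  have hstart : s₀ - lam ^ 2 * R ^ 2 ∈ Ioo (s₀ - R ^ 2) s₀ := by
    have : lam ^ 2 < 1 := pow_lt_one₀ hlam.1.le hlam.2 two_ne_zero
    have : 0 < lam ^ 2 * R ^ 2 := by have := hlam.1; positivity
    constructor <;> nlinarith [sq_pos_of_pos hR]
  have hle : s₀ - lam ^ 2 * R ^ 2 ≤ t := (hstart.2.trans ht.1).le
  have hIcc : Icc (s₀ - lam ^ 2 * R ^ 2) t ⊆ Ioo (s₀ - R ^ 2) (s₀ + lam ^ 2 * R ^ 2) :=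
    Icc_subset_Ioo hstart.1 ht.2
  have hball : closedBall x R ⊆ ball 0 (ρ + R) :=
    closedBall_subset_ball' (by linarith [mem_ball.1 hx])
  have htime : 2 * n * (t - (s₀ - lam ^ 2 * R ^ 2)) ≤ R ^ 2 / 4 := by
    calc 2 * n * (t - (s₀ - lam ^ 2 * R ^ 2)) ≤ 2 * n * (2 * (lam ^ 2 * R ^ 2)) := by
          gcongr
          linarith [ht.2]
      _ = 4 * n * lam ^ 2 * R ^ 2 := by ring
      _ ≤ 1 / 4 * R ^ 2 := by gcongr
      _ = R ^ 2 / 4 := by ring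
  constructor
  · exact hu.abs_le_add isOpen_Ioo isOpen_ball hIcc hR hball (fun y hy => hM _ hstart y (hball hy))
      hle (htime.trans_lt (by linarith [sq_pos_of_pos hR]))
  · rw [gradNormSq_eq_norm_gradient_sq]
    exact hu.one_add_norm_gradient_sq_le isOpen_Ioo isOpen_ball hIcc hR hball
      (fun y hy => (gradNorm_eq_norm_gradient (u _) y).symm.trans_le (hL _ hstart y (hball hy)))
      hle htime

/-- **Maintaining the graphical representation** (graphical case of Lemma `maintaingraphlem`).
For every `L₁ ≥ 1` there is `λ₁ ∈ (0,1)` such that: if `u` is a graphical mean curvature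
flow on `(s₀−R₁², s₀+λ₁²R₁²) × Bⁿ(0,ρ₁+R₁)` with `|u| < Γ₁+R₁`, and for all
`t ∈ (s₀−R₁²,s₀)` one has `sup |u(t,·)| < Γ₁−R₁` and `sup |Du(t,·)| ≤ L₁`, then for all
`t ∈ (s₀, s₀+λ₁²R₁²)` and `x ∈ Bⁿ(0,ρ₁)`:
`|u(t,x)| ≤ sup_{(s₀−R₁²,s₀)×Bⁿ(0,ρ₁+R₁)} |u| + R₁` and `|Du(t,x)| ≤ 4L₁`. -/
theorem maintaingraphlem (n : ℕ) (hn : 1 ≤ n) (L₁ : ℝ) (hL : 1 ≤ L₁) :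
    ∃ lam₁ ∈ Set.Ioo (0 : ℝ) 1,
      ∀ (ρ₁ R₁ Γ₁ : ℝ), 0 < ρ₁ → 0 < R₁ → 0 < Γ₁ → ∀ (s₀ : ℝ)
        (u : ℝ → EuclideanSpace ℝ (Fin n) → ℝ),
        IsGMCF (Set.Ioo (s₀ - R₁ ^ 2) (s₀ + lam₁ ^ 2 * R₁ ^ 2))
          (Metric.ball 0 (ρ₁ + R₁)) u →
        (∀ t ∈ Set.Ioo (s₀ - R₁ ^ 2) (s₀ + lam₁ ^ 2 * R₁ ^ 2),
          ∀ x ∈ Metric.ball (0 : EuclideanSpace ℝ (Fin n)) (ρ₁ + R₁), |u t x| < Γ₁ + R₁) →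
        (∀ t ∈ Set.Ioo (s₀ - R₁ ^ 2) s₀,
          sSup ((fun x => |u t x|) '' Metric.ball (0 : EuclideanSpace ℝ (Fin n)) (ρ₁ + R₁))
            < Γ₁ - R₁) →
        (∀ t ∈ Set.Ioo (s₀ - R₁ ^ 2) s₀,
          ∀ x ∈ Metric.ball (0 : EuclideanSpace ℝ (Fin n)) (ρ₁ + R₁),
            gradNorm (u t) x ≤ L₁) →
        ∀ t ∈ Set.Ioo s₀ (s₀ + lam₁ ^ 2 * R₁ ^ 2),
        ∀ x ∈ Metric.ball (0 : EuclideanSpace ℝ (Fin n)) ρ₁,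
          |u t x| ≤ sSup ((fun p : ℝ × EuclideanSpace ℝ (Fin n) => |u p.1 p.2|) ''
              (Set.Ioo (s₀ - R₁ ^ 2) s₀ ×ˢ
                Metric.ball (0 : EuclideanSpace ℝ (Fin n)) (ρ₁ + R₁))) + R₁ ∧
          gradNorm (u t) x ≤ 4 * L₁ := by
  obtain ⟨lam, hlam, hgeneral⟩ := maintaingraphlem_general n
  refine ⟨lam, hlam, fun ρ R Γ _ hR _ s₀ u hu hbound _ hgrad t ht x hx => ?_⟩
  have hlate : s₀ ≤ s₀ + lam ^ 2 * R ^ 2 := (ht.1.trans ht.2).le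
  have hbdd : BddAbove ((fun p : ℝ × EuclideanSpace ℝ (Fin n) => |u p.1 p.2|) ''
      (Ioo (s₀ - R ^ 2) s₀ ×ˢ ball 0 (ρ + R))) := by
    refine ⟨Γ + R, ?_⟩
    rintro _ ⟨⟨s, y⟩, ⟨hs, hy⟩, rfl⟩
    exact (hbound s (Ioo_subset_Ioo_right hlate hs) y hy).le
  exact (hgeneral ρ R hR s₀ u _ L₁ hu (fun s hs y hy => le_csSup hbdd ⟨(s, y), ⟨hs, hy⟩, rfl⟩)
    hgrad t ht x hx).imp_right (gradNorm_le_four_mul hL)
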